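/- Let r ≥ 2. The Lie algebra homomorphism ι : t(r) → ft(r) determined by ι(t_{ij}) = t_{ij} for all i ≠ j is injective. (This realizes the Drinfeld–Kohno Lie algebra t(r) as a Lie subalgebra of ft(r), obtained by dropping the diagonal generators t_{ii}; a left inverse is given by the Lie algebra homomorphism ft(r) → t(r) sending t_{ij} ↦ t_{ij} for i ≠ j and t_{ii} ↦ 0.) -/

import Mathlib

open FreeLieAlgebra

/-- The defining relations of the framed Drinfeld–Kohno Lie algebra `ft(r)`.  Generators are
indexed by `Fin r × Fin r`, the index `i : Fin r` representing `i+1 ∈ {1,…,r}`. -/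
def ftRel (r : ℕ) : Set (FreeLieAlgebra ℚ (Fin r × Fin r)) :=
  { x | (∃ i j : Fin r, x = of ℚ (i, j) - of ℚ (j, i)) ∨
        (∃ i j k l : Fin r, ({i, j} ∩ {k, l} : Set (Fin r)) = ∅ ∧
          x = ⁅of ℚ (i, j), of ℚ (k, l)⁆) ∨
        (∃ i j k : Fin r, x = ⁅of ℚ (i, j), of ℚ (k, i) + of ℚ (k, j)⁆) }

/-- The framed Drinfeld–Kohno Lie algebra `ft(r)`: the quotient of the free Lie algebra over `ℚ`
on the generators `t_{ij}`, `1 ≤ i,j ≤ r`, by the Lie ideal generated by the relations. -/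
abbrev ft (r : ℕ) :=
  FreeLieAlgebra ℚ (Fin r × Fin r) ⧸
    LieSubmodule.lieSpan ℚ (FreeLieAlgebra ℚ (Fin r × Fin r)) (ftRel r)

/-- The image `t_{ij}` in `ft(r)` of the generator indexed by `(i,j)`. -/
noncomputable def tf {r : ℕ} (i j : Fin r) : ft r :=
  LieSubmodule.Quotient.mk
    (N := LieSubmodule.lieSpan ℚ (FreeLieAlgebra ℚ (Fin r × Fin r)) (ftRel r))
    (of ℚ (i, j))

/-- The defining relations of the (non-framed) Drinfeld–Kohno Lie algebra `t(r)`.  Generators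
are indexed by pairs `(i,j)` with `i ≠ j`. -/
def tkRel (r : ℕ) : Set (FreeLieAlgebra ℚ {p : Fin r × Fin r // p.1 ≠ p.2}) :=
  { x | (∃ (i j : Fin r) (h : i ≠ j),
          x = of ℚ (⟨(i, j), h⟩ : {p : Fin r × Fin r // p.1 ≠ p.2}) -
              of ℚ (⟨(j, i), h.symm⟩ : {p : Fin r × Fin r // p.1 ≠ p.2})) ∨
        (∃ (i j k l : Fin r) (hij : i ≠ j) (hkl : k ≠ l),
          ({i, j} ∩ {k, l} : Set (Fin r)) = ∅ ∧
          x = ⁅of ℚ (⟨(i, j), hij⟩ : {p : Fin r × Fin r // p.1 ≠ p.2}),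
               of ℚ (⟨(k, l), hkl⟩ : {p : Fin r × Fin r // p.1 ≠ p.2})⁆) ∨
        (∃ (i j k : Fin r) (hij : i ≠ j) (hki : k ≠ i) (hkj : k ≠ j),
          x = ⁅of ℚ (⟨(i, j), hij⟩ : {p : Fin r × Fin r // p.1 ≠ p.2}),
               of ℚ (⟨(k, i), hki⟩ : {p : Fin r × Fin r // p.1 ≠ p.2}) +
               of ℚ (⟨(k, j), hkj⟩ : {p : Fin r × Fin r // p.1 ≠ p.2})⁆) }

/-- The (non-framed) Drinfeld–Kohno Lie algebra `t(r)`. -/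
abbrev tk (r : ℕ) :=
  FreeLieAlgebra ℚ {p : Fin r × Fin r // p.1 ≠ p.2} ⧸
    LieSubmodule.lieSpan ℚ (FreeLieAlgebra ℚ {p : Fin r × Fin r // p.1 ≠ p.2}) (tkRel r)

/-- The image `t_{ij}` (with `i ≠ j`) in `t(r)` of the corresponding generator. -/
noncomputable def tn {r : ℕ} (i j : Fin r) (h : i ≠ j) : tk r :=
  LieSubmodule.Quotient.mk
    (N := LieSubmodule.lieSpan ℚ (FreeLieAlgebra ℚ {p : Fin r × Fin r // p.1 ≠ p.2}) (tkRel r))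
    (of ℚ (⟨(i, j), h⟩ : {p : Fin r × Fin r // p.1 ≠ p.2}))

/-!
Both algebras are presented by generators and relations, so homomorphisms out of them amount to
families of elements satisfying the relations. Dropping the diagonal of a framed family gives a
non-framed one, whence `ι`. Conversely, a non-framed family extended by zero on the diagonal
satisfies the framed relations: the only cases not among the non-framed relations either involve a
zero generator or, for the four-term relation with `k ∈ {i, j}`, reduce to `⁅t_{ij}, t_{ij}⁆ = 0`.
This gives `π : ft(r) → t(r)`, and `π ∘ ι` fixes the generators of `t(r)`.
-/

section Presentation

variable {R X L L₂ : Type*} [CommRing R] [LieRing L] [LieAlgebra R L] [LieRing L₂] [LieAlgebra R L₂]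

/-- The projection of a Lie algebra onto its quotient by an ideal, as a Lie algebra homomorphism
(`LieSubmodule.Quotient.mk'` is only a homomorphism of modules over the original algebra). -/
def lieQuotientMk (I : LieIdeal R L) : L →ₗ⁅R⁆ L ⧸ I where
  __ := I.toSubmodule.mkQ
  map_lie' := rfl

/-- The homomorphism induced on the quotient by an ideal contained in the kernel. -/
def lieQuotientLift (I : LieIdeal R L) (f : L →ₗ⁅R⁆ L₂) (hI : I ≤ f.ker) : L ⧸ I →ₗ⁅R⁆ L₂ where
  __ := I.toSubmodule.liftQ (f : L →ₗ[R] L₂) fun _ hx => f.mem_ker.1 (hI hx)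
  map_lie' {x y} := by
    induction x using Submodule.Quotient.induction_on with | _ x
    induction y using Submodule.Quotient.induction_on with | _ y
    exact f.map_lie x y

theorem lieQuotient_mk_eq_zero_of_mem {S : Set L} {x : L} (hx : x ∈ S) :
    (LieSubmodule.Quotient.mk x : L ⧸ LieSubmodule.lieSpan R L S) = 0 :=
  LieSubmodule.Quotient.mk_eq_zero'.2 (LieSubmodule.subset_lieSpan hx)

/-- The universal property of the Lie algebra with generators `X` and relations `S`: elements
`t x` satisfying the relations induce a homomorphism. -/
noncomputable def presentedLift (S : Set (FreeLieAlgebra R X)) (t : X → L)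
    (hS : ∀ x ∈ S, lift R t x = 0) :
    FreeLieAlgebra R X ⧸ LieSubmodule.lieSpan R (FreeLieAlgebra R X) S →ₗ⁅R⁆ L :=
  lieQuotientLift _ (lift R t) <| LieSubmodule.lieSpan_le.2 fun x hx => LieHom.mem_ker.2 (hS x hx)

theorem presentedLift_mk_of (S : Set (FreeLieAlgebra R X)) (t : X → L)
    (hS : ∀ x ∈ S, lift R t x = 0) (x : X) :
    presentedLift S t hS (LieSubmodule.Quotient.mk (of R x)) = t x :=
  lift_of_apply t x

theorem presented_hom_ext {I : LieIdeal R (FreeLieAlgebra R X)}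
    {f g : FreeLieAlgebra R X ⧸ I →ₗ⁅R⁆ L}
    (h : ∀ x, f (LieSubmodule.Quotient.mk (of R x)) = g (LieSubmodule.Quotient.mk (of R x))) :
    f = g := by
  have comp_mk_eq : f.comp (lieQuotientMk I) = g.comp (lieQuotientMk I) := hom_ext h
  ext x
  induction x using Submodule.Quotient.induction_on with | _ x
  exact LieHom.congr_fun comp_mk_eq x

end Presentation

section Families

variable {ι L : Type*} [LieRing L]

/-- Families `t` of elements of a Lie ring satisfying the relations of the framed Drinfeld–Kohno
Lie algebra, over an arbitrary index type. -/
structure IsFramedDrinfeldKohnoFamily (t : ι → ι → L) : Prop where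
  symm (i j : ι) : t i j = t j i
  lie_eq_zero_of_disjoint {i j k l : ι} (h : Disjoint ({i, j} : Set ι) {k, l}) :
    ⁅t i j, t k l⁆ = 0
  four_term (i j k : ι) : ⁅t i j, t k i + t k j⁆ = 0

/-- Families `t` of elements of a Lie ring satisfying the relations of the Drinfeld–Kohno Lie
algebra, over an arbitrary index type; `t` is defined off the diagonal only. -/
structure IsDrinfeldKohnoFamily (t : ∀ i j : ι, i ≠ j → L) : Prop where
  symm {i j : ι} (h : i ≠ j) : t i j h = t j i h.symm
  lie_eq_zero_of_disjoint {i j k l : ι} (hij : i ≠ j) (hkl : k ≠ l)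
    (h : Disjoint ({i, j} : Set ι) {k, l}) : ⁅t i j hij, t k l hkl⁆ = 0
  four_term {i j k : ι} (hij : i ≠ j) (hki : k ≠ i) (hkj : k ≠ j) :
    ⁅t i j hij, t k i hki + t k j hkj⁆ = 0

theorem IsFramedDrinfeldKohnoFamily.offDiag {t : ι → ι → L} (ht : IsFramedDrinfeldKohnoFamily t) :
    IsDrinfeldKohnoFamily fun i j _ => t i j where
  symm _ := ht.symm _ _
  lie_eq_zero_of_disjoint _ _ h := ht.lie_eq_zero_of_disjoint h
  four_term _ _ _ := ht.four_term _ _ _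

open Classical in
/-- The extension by zero of an off-diagonal family to the diagonal. -/
noncomputable def zeroOnDiag (t : ∀ i j : ι, i ≠ j → L) (i j : ι) : L :=
  if h : i ≠ j then t i j h else 0

theorem zeroOnDiag_of_ne (t : ∀ i j : ι, i ≠ j → L) {i j : ι} (h : i ≠ j) :
    zeroOnDiag t i j = t i j h :=
  dif_pos h

theorem zeroOnDiag_self (t : ∀ i j : ι, i ≠ j → L) (i : ι) : zeroOnDiag t i i = 0 :=
  dif_neg (not_not.2 rfl)

namespace IsDrinfeldKohnoFamily

variable {t : ∀ i j : ι, i ≠ j → L}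

theorem zeroOnDiag_symm (ht : IsDrinfeldKohnoFamily t) (i j : ι) :
    zeroOnDiag t i j = zeroOnDiag t j i := by
  obtain rfl | hij := eq_or_ne i j
  · rfl
  · rw [zeroOnDiag_of_ne t hij, zeroOnDiag_of_ne t hij.symm, ht.symm hij]

theorem zeroOnDiag_lie_eq_zero_of_disjoint (ht : IsDrinfeldKohnoFamily t) {i j k l : ι}
    (h : Disjoint ({i, j} : Set ι) {k, l}) : ⁅zeroOnDiag t i j, zeroOnDiag t k l⁆ = 0 := by
  obtain rfl | hij := eq_or_ne i j
  · rw [zeroOnDiag_self, zero_lie]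
  obtain rfl | hkl := eq_or_ne k l
  · rw [zeroOnDiag_self, lie_zero]
  rw [zeroOnDiag_of_ne t hij, zeroOnDiag_of_ne t hkl, ht.lie_eq_zero_of_disjoint hij hkl h]

theorem zeroOnDiag_four_term (ht : IsDrinfeldKohnoFamily t) (i j k : ι) :
    ⁅zeroOnDiag t i j, zeroOnDiag t k i + zeroOnDiag t k j⁆ = 0 := by
  obtain rfl | hij := eq_or_ne i j
  · rw [zeroOnDiag_self, zero_lie]
  obtain rfl | hki := eq_or_ne k i
  · rw [zeroOnDiag_self, zero_add, lie_self]
  obtain rfl | hkj := eq_or_ne k j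
  · rw [zeroOnDiag_self, add_zero, ht.zeroOnDiag_symm k i, lie_self]
  rw [zeroOnDiag_of_ne t hij, zeroOnDiag_of_ne t hki, zeroOnDiag_of_ne t hkj,
    ht.four_term hij hki hkj]

theorem isFramedDrinfeldKohnoFamily_zeroOnDiag (ht : IsDrinfeldKohnoFamily t) :
    IsFramedDrinfeldKohnoFamily (zeroOnDiag t) where
  symm := ht.zeroOnDiag_symm
  lie_eq_zero_of_disjoint := ht.zeroOnDiag_lie_eq_zero_of_disjoint
  four_term := ht.zeroOnDiag_four_term

end IsDrinfeldKohnoFamily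

end Families

section UniversalProperties

variable {r : ℕ} {L : Type*} [LieRing L] [LieAlgebra ℚ L]

theorem isFramedDrinfeldKohnoFamily_tf : IsFramedDrinfeldKohnoFamily (tf (r := r)) where
  symm i j := sub_eq_zero.1 <| lieQuotient_mk_eq_zero_of_mem <| .inl ⟨i, j, rfl⟩
  lie_eq_zero_of_disjoint h :=
    lieQuotient_mk_eq_zero_of_mem <| .inr <| .inl ⟨_, _, _, _, h.inter_eq, rfl⟩
  four_term i j k := lieQuotient_mk_eq_zero_of_mem <| .inr <| .inr ⟨i, j, k, rfl⟩

theorem isDrinfeldKohnoFamily_tn : IsDrinfeldKohnoFamily (tn (r := r)) where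
  symm h := sub_eq_zero.1 <| lieQuotient_mk_eq_zero_of_mem <| .inl ⟨_, _, h, rfl⟩
  lie_eq_zero_of_disjoint hij hkl h :=
    lieQuotient_mk_eq_zero_of_mem <| .inr <| .inl ⟨_, _, _, _, hij, hkl, h.inter_eq, rfl⟩
  four_term hij hki hkj :=
    lieQuotient_mk_eq_zero_of_mem <| .inr <| .inr ⟨_, _, _, hij, hki, hkj, rfl⟩

/-- The homomorphism out of `ft(r)` determined by a framed Drinfeld–Kohno family. -/
noncomputable def ftLift (t : Fin r → Fin r → L) (ht : IsFramedDrinfeldKohnoFamily t) :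
    ft r →ₗ⁅ℚ⁆ L :=
  presentedLift (ftRel r) (fun p => t p.1 p.2) <| by
    rintro x (⟨i, j, rfl⟩ | ⟨i, j, k, l, h, rfl⟩ | ⟨i, j, k, rfl⟩)
    · simpa only [map_sub, lift_of_apply] using sub_eq_zero.2 (ht.symm i j)
    · simpa only [LieHom.map_lie, lift_of_apply] using
        ht.lie_eq_zero_of_disjoint (Set.disjoint_iff_inter_eq_empty.2 h)
    · simpa only [LieHom.map_lie, map_add, lift_of_apply] using ht.four_term i j k

theorem ftLift_tf (t : Fin r → Fin r → L) (ht : IsFramedDrinfeldKohnoFamily t) (i j : Fin r) :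
    ftLift t ht (tf i j) = t i j :=
  presentedLift_mk_of (ftRel r) (fun p => t p.1 p.2) _ (i, j)

/-- The homomorphism out of `t(r)` determined by a Drinfeld–Kohno family. -/
noncomputable def tkLift (t : ∀ i j : Fin r, i ≠ j → L) (ht : IsDrinfeldKohnoFamily t) :
    tk r →ₗ⁅ℚ⁆ L :=
  presentedLift (tkRel r) (fun p => t p.1.1 p.1.2 p.2) <| by
    rintro x (⟨i, j, h, rfl⟩ | ⟨i, j, k, l, hij, hkl, h, rfl⟩ | ⟨i, j, k, hij, hki, hkj, rfl⟩)
    · simpa only [map_sub, lift_of_apply] using sub_eq_zero.2 (ht.symm h)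
    · simpa only [LieHom.map_lie, lift_of_apply] using
        ht.lie_eq_zero_of_disjoint hij hkl (Set.disjoint_iff_inter_eq_empty.2 h)
    · simpa only [LieHom.map_lie, map_add, lift_of_apply] using ht.four_term hij hki hkj

theorem tkLift_tn (t : ∀ i j : Fin r, i ≠ j → L) (ht : IsDrinfeldKohnoFamily t) {i j : Fin r}
    (h : i ≠ j) : tkLift t ht (tn i j h) = t i j h :=
  presentedLift_mk_of (tkRel r) (fun p => t p.1.1 p.1.2 p.2) _ ⟨(i, j), h⟩

theorem tk_hom_ext {f g : tk r →ₗ⁅ℚ⁆ L}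
    (h : ∀ (i j : Fin r) (hij : i ≠ j), f (tn i j hij) = g (tn i j hij)) : f = g :=
  presented_hom_ext fun p => h p.1.1 p.1.2 p.2

end UniversalProperties

/-- The homomorphism `ι : t(r) → ft(r)` with `t_{ij} ↦ t_{ij}`. -/
noncomputable def tkToFt (r : ℕ) : tk r →ₗ⁅ℚ⁆ ft r :=
  tkLift (fun i j _ => tf i j) isFramedDrinfeldKohnoFamily_tf.offDiag

/-- The homomorphism `π : ft(r) → t(r)` with `t_{ij} ↦ t_{ij}` for `i ≠ j` and `t_{ii} ↦ 0`. -/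
noncomputable def ftToTk (r : ℕ) : ft r →ₗ⁅ℚ⁆ tk r :=
  ftLift (zeroOnDiag tn) isDrinfeldKohnoFamily_tn.isFramedDrinfeldKohnoFamily_zeroOnDiag

theorem tkToFt_tn {r : ℕ} {i j : Fin r} (h : i ≠ j) : tkToFt r (tn i j h) = tf i j :=
  tkLift_tn _ _ h

theorem ftToTk_tf_of_ne {r : ℕ} {i j : Fin r} (h : i ≠ j) : ftToTk r (tf i j) = tn i j h :=
  (ftLift_tf _ _ i j).trans (zeroOnDiag_of_ne tn h)

theorem ftToTk_comp_tkToFt (r : ℕ) : (ftToTk r).comp (tkToFt r) = LieHom.id :=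
  tk_hom_ext fun i j h => by
    rw [LieHom.comp_apply, tkToFt_tn, ftToTk_tf_of_ne h, LieHom.id_apply]

/-- For `r ≥ 2` the Lie algebra homomorphism `ι : t(r) → ft(r)` determined
by `ι(t_{ij}) = t_{ij}` for all `i ≠ j` exists and is injective; it realizes `t(r)` as a Lie
subalgebra of `ft(r)`. -/
theorem tk_injects_into_ft (r : ℕ) (hr : 2 ≤ r) :
    ∃ ι : tk r →ₗ⁅ℚ⁆ ft r,
      (∀ (i j : Fin r) (h : i ≠ j), ι (tn i j h) = tf i j) ∧
      Function.Injective ι := by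
  have leftInverse : Function.LeftInverse (ftToTk r) (tkToFt r) :=
    LieHom.congr_fun (ftToTk_comp_tkToFt r)
  exact ⟨tkToFt r, fun _ _ h => tkToFt_tn h, leftInverse.injective⟩
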